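/- Let G be the group of isometries of the hyperbolic plane generated by reflections in the sides of a triangle with angles π/a, π/b, π/c where 2 ≤ a ≤ b ≤ c and 1/a + 1/b + 1/c < 1. Then G acts properly discontinuously and cocompactly on the hyperbolic plane; consequently the triangle group T_{a,b,c} is a cocompact lattice in the isometry group of the hyperbolic plane. -/

import Mathlib

open UpperHalfPlane

/-- The relations of the `(a,b,c)` triangle group
`⟨x, y, z ∣ x² = y² = z² = (xy)^a = (yz)^b = (zx)^c = 1⟩`. -/
def triangleRels (a b c : ℕ) : Set (FreeGroup (Fin 3)) :=
  {FreeGroup.of 0 ^ 2, FreeGroup.of 1 ^ 2, FreeGroup.of 2 ^ 2,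
    (FreeGroup.of 0 * FreeGroup.of 1) ^ a,
    (FreeGroup.of 1 * FreeGroup.of 2) ^ b,
    (FreeGroup.of 2 * FreeGroup.of 0) ^ c}

/-- A geodesic of the upper half plane with a choice of side, encoded by the trace-zero matrix
`!![p, q; r, -p]` of determinant `-1`. -/
structure Mirror where
  p : ℝ
  q : ℝ
  r : ℝ
  sq_add_mul : p ^ 2 + q * r = 1

namespace Mirror

/-- The invariant symmetric form of signature `(2, 1)` on trace-zero matrices. -/
noncomputable def form (M N : Mirror) : ℝ := M.p * N.p + (M.q * N.r + M.r * N.q) / 2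

lemma form_self (M : Mirror) : M.form M = 1 := by
  rw [← M.sq_add_mul, form]; ring

lemma form_comm (M N : Mirror) : M.form N = N.form M := by
  simp only [form]; ring

/-- The element of `GL₂(ℝ)` that acts as the reflection in the mirror. -/
noncomputable def toGL (M : Mirror) : GL (Fin 2) ℝ :=
  .mkOfDetNeZero !![M.p, M.q; M.r, -M.p] (by
    rw [Matrix.det_fin_two_of]; linarith [M.sq_add_mul])

lemma val_toGL (M : Mirror) : M.toGL.val = !![M.p, M.q; M.r, -M.p] := rfl

lemma toGL_mul_self (M : Mirror) : M.toGL * M.toGL = 1 := by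
  have h := M.sq_add_mul
  ext i j
  fin_cases i <;> fin_cases j <;> simp [val_toGL, Matrix.mul_apply, Fin.sum_univ_two] <;>
    linarith

/-- The signed side function of the mirror; it vanishes exactly on the geodesic. -/
noncomputable def side (M : Mirror) (z : ℍ) : ℝ :=
  (M.r * (z.re ^ 2 + z.im ^ 2) - 2 * M.p * z.re - M.q) / z.im

lemma continuous_side (M : Mirror) : Continuous M.side := by
  unfold side
  have := UpperHalfPlane.continuous_re
  have := UpperHalfPlane.continuous_im
  exact Continuous.div (by fun_prop) (by fun_prop) fun z ↦ z.im_ne_zero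

lemma normSq_denom_toGL (M : Mirror) (z : ℍ) :
    Complex.normSq (denom M.toGL z) = (M.r * z.re - M.p) ^ 2 + (M.r * z.im) ^ 2 := by
  simp [denom, val_toGL, Complex.normSq_apply]
  ring

lemma normSq_denom_toGL_pos (M : Mirror) (z : ℍ) :
    0 < (M.r * z.re - M.p) ^ 2 + (M.r * z.im) ^ 2 := by
  rw [← normSq_denom_toGL]
  exact normSq_denom_pos _ z.im_ne_zero

lemma im_toGL_smul (M : Mirror) (z : ℍ) :
    (M.toGL • z).im = z.im / ((M.r * z.re - M.p) ^ 2 + (M.r * z.im) ^ 2) := by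
  rw [im_smul_eq_div_normSq, normSq_denom_toGL]
  have : M.toGL.det.val = -1 := by
    simp [val_toGL, Matrix.det_fin_two_of]; linarith [M.sq_add_mul]
  simp [this]

lemma re_toGL_smul (M : Mirror) (z : ℍ) :
    (M.toGL • z).re = (M.p * M.r * (z.re ^ 2 + z.im ^ 2) - M.p ^ 2 * z.re + M.q * M.r * z.re
      - M.p * M.q) / ((M.r * z.re - M.p) ^ 2 + (M.r * z.im) ^ 2) := by
  rw [re_smul, Complex.div_re, normSq_denom_toGL, ← add_div]
  congr 1
  simp [num, denom, val_toGL]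
  ring

lemma inv_im_toGL_smul (M : Mirror) (z : ℍ) :
    (M.toGL • z).im⁻¹ = ((M.r * z.re - M.p) ^ 2 + (M.r * z.im) ^ 2) / z.im := by
  rw [im_toGL_smul, inv_div]

lemma re_div_im_toGL_smul (M : Mirror) (z : ℍ) :
    (M.toGL • z).re / (M.toGL • z).im = (M.p * M.r * (z.re ^ 2 + z.im ^ 2) - M.p ^ 2 * z.re
      + M.q * M.r * z.re - M.p * M.q) / z.im := by
  rw [im_toGL_smul, re_toGL_smul, div_div_div_cancel_right₀ (M.normSq_denom_toGL_pos z).ne']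

lemma normSq_div_im_toGL_smul (M : Mirror) (z : ℍ) :
    ((M.toGL • z).re ^ 2 + (M.toGL • z).im ^ 2) / (M.toGL • z).im =
      ((M.p * z.re + M.q) ^ 2 + (M.p * z.im) ^ 2) / z.im := by
  have hn := (M.normSq_denom_toGL_pos z).ne'
  have hz := z.im_ne_zero
  rw [im_toGL_smul, re_toGL_smul]
  generalize hN : (M.r * z.re - M.p) ^ 2 + (M.r * z.im) ^ 2 = n at hn
  field_simp
  linear_combination (-z.im ^ 2 * (1 + (M.p ^ 2 + M.q * M.r))) * M.sq_add_mul +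
    ((M.p * z.re + M.q) ^ 2 + (M.p * z.im) ^ 2) * hN

lemma side_eq (M : Mirror) (z : ℍ) : M.side z =
    M.r * ((z.re ^ 2 + z.im ^ 2) / z.im) - 2 * M.p * (z.re / z.im) - M.q * z.im⁻¹ := by
  rw [side]; ring

lemma cosh_dist_eq_linear (z w : ℍ) : Real.cosh (dist z w) =
    ((z.re ^ 2 + z.im ^ 2) / z.im * w.im⁻¹ - 2 * (z.re / z.im) * (w.re / w.im)
      + z.im⁻¹ * ((w.re ^ 2 + w.im ^ 2) / w.im)) / 2 := by
  have hz := z.im_ne_zero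
  have hw := w.im_ne_zero
  rw [cosh_dist']
  field_simp
  ring

lemma cosh_dist_toGL_smul (M : Mirror) (z w : ℍ) : Real.cosh (dist (M.toGL • z) w) =
    Real.cosh (dist z w) + M.side z * M.side w / 2 := by
  have hz := z.im_ne_zero
  have hw := w.im_ne_zero
  rw [cosh_dist_eq_linear, cosh_dist_eq_linear, inv_im_toGL_smul, re_div_im_toGL_smul,
    normSq_div_im_toGL_smul, side, side]
  field_simp
  linear_combination ((z.re ^ 2 + z.im ^ 2) - 2 * z.re * w.re + (w.re ^ 2 + w.im ^ 2)) *
    M.sq_add_mul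

lemma side_toGL_smul (M N : Mirror) (z : ℍ) :
    N.side (M.toGL • z) = N.side z - 2 * M.form N * M.side z := by
  have hz := z.im_ne_zero
  rw [side_eq, inv_im_toGL_smul, re_div_im_toGL_smul, normSq_div_im_toGL_smul, side, side, form]
  field_simp
  linear_combination (N.r * (z.re ^ 2 + z.im ^ 2) - 2 * N.p * z.re - N.q) * M.sq_add_mul

lemma isometry_toGL_smul (M : Mirror) : Isometry fun z : ℍ ↦ M.toGL • z := by
  refine Isometry.of_dist_eq fun z w ↦ ?_
  have h : Real.cosh (dist (M.toGL • z) (M.toGL • w)) = Real.cosh (dist z w) := by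
    rw [cosh_dist_toGL_smul, dist_comm, cosh_dist_toGL_smul, side_toGL_smul, form_self, dist_comm]
    ring
  have h₁ := Real.cosh_le_cosh.1 h.le
  have h₂ := Real.cosh_le_cosh.1 h.ge
  simp only [abs_dist] at h₁ h₂
  exact le_antisymm h₁ h₂

/-- The hyperbolic reflection in a mirror. -/
noncomputable def reflection (M : Mirror) : ℍ ≃ᵢ ℍ :=
  ⟨MulAction.toPerm M.toGL, M.isometry_toGL_smul⟩

lemma reflection_apply (M : Mirror) (z : ℍ) : M.reflection z = M.toGL • z := rfl

lemma reflection_mul_pow_apply (M N : Mirror) (k : ℕ) (z : ℍ) :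
    ((M.reflection * N.reflection) ^ k) z = (M.toGL * N.toGL) ^ k • z := by
  induction k with
  | zero => simp
  | succ k ih =>
    rw [pow_succ', pow_succ', mul_smul, mul_smul, ← ih]
    rfl

lemma sin_smul_toGL_mul_pow (M N : Mirror) {θ : ℝ} (h : M.form N = -Real.cos θ) (k : ℕ) :
    Real.sin θ • (-(M.toGL * N.toGL).val) ^ (k + 1) =
      Real.sin ((k + 1) * θ) • (-(M.toGL * N.toGL).val) - Real.sin (k * θ) • 1 := by
  induction k with
  | zero => simp
  | succ k ih =>
    have hM := M.sq_add_mul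
    have hN := N.sq_add_mul
    have hsq : (-(M.toGL * N.toGL).val) * (-(M.toGL * N.toGL).val) =
        (2 * Real.cos θ) • (-(M.toGL * N.toGL).val) - 1 := by
      have hc : Real.cos θ = -M.form N := by linarith
      rw [hc, form, Units.val_mul, val_toGL, val_toGL]
      ext i j
      fin_cases i <;> fin_cases j <;>
        simp [Matrix.mul_apply, Fin.sum_univ_two]
      · linear_combination -(N.p ^ 2 + N.q * N.r) * hM - hN
      · ring
      · ring
      · linear_combination -(N.p ^ 2 + N.q * N.r) * hM - hN
    rw [pow_succ, ← smul_mul_assoc, ih, sub_mul, smul_mul_assoc, hsq, smul_mul_assoc, one_mul,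
      smul_sub, smul_smul]
    have h1 : Real.sin ((((k + 1 : ℕ) : ℝ) + 1) * θ) =
        Real.sin ((k + 1) * θ) * (2 * Real.cos θ) - Real.sin (k * θ) := by
      have e1 : (((k + 1 : ℕ) : ℝ) + 1) * θ = (k + 1) * θ + θ := by push_cast; ring
      have e2 : (k : ℝ) * θ = (k + 1) * θ - θ := by ring
      rw [e1, e2, Real.sin_add, Real.sin_sub]; ring
    rw [h1]
    push_cast
    module

lemma reflection_mul_pow_eq_one (M N : Mirror) {m : ℕ} (hm : 2 ≤ m)
    (h : M.form N = -Real.cos (Real.pi / m)) : (M.reflection * N.reflection) ^ m = 1 := by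
  obtain ⟨k, rfl⟩ : ∃ k, m = k + 1 := ⟨m - 1, by omega⟩
  have hm' : (2 : ℝ) ≤ ((k + 1 : ℕ) : ℝ) := by exact_mod_cast hm
  set θ := Real.pi / ((k + 1 : ℕ) : ℝ) with hθ
  have hs : Real.sin θ ≠ 0 := by
    refine (Real.sin_pos_of_pos_of_lt_pi (by positivity) ?_).ne'
    exact div_lt_self Real.pi_pos (by linarith)
  have key := sin_smul_toGL_mul_pow M N h k
  have e1 : ((k : ℝ) + 1) * θ = Real.pi := by rw [hθ]; push_cast; field_simp
  have e2 : (k : ℝ) * θ = Real.pi - θ := by linarith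
  rw [e1, e2, Real.sin_pi, Real.sin_pi_sub, zero_smul, zero_sub, ← smul_neg] at key
  have key' := smul_right_injective _ hs key
  have hpow : (-(M.toGL * N.toGL)) ^ (k + 1) = -1 := by
    ext1
    simpa using key'
  ext1 z
  rw [reflection_mul_pow_apply]
  rcases Nat.even_or_odd (k + 1) with he | ho
  · rw [he.neg_pow] at hpow
    rw [hpow, UpperHalfPlane.neg_smul, one_smul]
    rfl
  · rw [ho.neg_pow, neg_inj] at hpow
    rw [hpow, one_smul]
    rfl

lemma reflection_mul_self (M : Mirror) : M.reflection * M.reflection = 1 := by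
  ext1 z
  change M.toGL • M.toGL • z = z
  rw [smul_smul, toGL_mul_self, one_smul]

lemma gram_adjugate_side (L M N : Mirror) (z : ℍ) :
    (1 - M.form N ^ 2) * L.side z ^ 2 + (1 - N.form L ^ 2) * M.side z ^ 2 +
      (1 - L.form M ^ 2) * N.side z ^ 2 +
      2 * (N.form L * M.form N - L.form M) * (L.side z * M.side z) +
      2 * (L.form M * N.form L - M.form N) * (M.side z * N.side z) +
      2 * (L.form M * M.form N - N.form L) * (N.side z * L.side z) =
    4 * (L.form M ^ 2 + M.form N ^ 2 + N.form L ^ 2 -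
      2 * L.form M * M.form N * N.form L - 1) := by
  have key : (M.form M * N.form N - M.form N ^ 2) * L.side z ^ 2 +
      (N.form N * L.form L - N.form L ^ 2) * M.side z ^ 2 +
      (L.form L * M.form M - L.form M ^ 2) * N.side z ^ 2 +
      2 * (N.form L * M.form N - L.form M * N.form N) * (L.side z * M.side z) +
      2 * (L.form M * N.form L - M.form N * L.form L) * (M.side z * N.side z) +
      2 * (L.form M * M.form N - N.form L * M.form M) * (N.side z * L.side z) =
    4 * (L.form M ^ 2 * N.form N + M.form N ^ 2 * L.form L + N.form L ^ 2 * M.form M -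
      2 * L.form M * M.form N * N.form L - L.form L * M.form M * N.form N) := by
    have hz := z.im_ne_zero
    simp only [side, form]
    field_simp
    ring
  simpa only [form_self, one_mul, mul_one] using key

lemma exists_side_le (L M N : Mirror) (hLM : L.form M ≤ 0) (hMN : M.form N ≤ 0)
    (hNL : N.form L ≤ 0) (hL : L.form M ^ 2 < 1) (hM : M.form N ^ 2 < 1) (hN : N.form L ^ 2 < 1) :
    ∃ K, ∀ z, 0 ≤ L.side z → 0 ≤ M.side z → 0 ≤ N.side z → L.side z ≤ K := by
  refine ⟨4 * (L.form M ^ 2 + M.form N ^ 2 + N.form L ^ 2 -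
    2 * L.form M * M.form N * N.form L - 1) / (1 - M.form N ^ 2) + 1, fun z hl hm hn ↦ ?_⟩
  have key := gram_adjugate_side L M N z
  have h1 : 0 ≤ (1 - N.form L ^ 2) * M.side z ^ 2 := mul_nonneg (by linarith) (sq_nonneg _)
  have h2 : 0 ≤ (1 - L.form M ^ 2) * N.side z ^ 2 := mul_nonneg (by linarith) (sq_nonneg _)
  have h3 : 0 ≤ (N.form L * M.form N - L.form M) * (L.side z * M.side z) :=
    mul_nonneg (by linarith [mul_nonneg_of_nonpos_of_nonpos hNL hMN]) (mul_nonneg hl hm)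
  have h4 : 0 ≤ (L.form M * N.form L - M.form N) * (M.side z * N.side z) :=
    mul_nonneg (by linarith [mul_nonneg_of_nonpos_of_nonpos hLM hNL]) (mul_nonneg hm hn)
  have h5 : 0 ≤ (L.form M * M.form N - N.form L) * (N.side z * L.side z) :=
    mul_nonneg (by linarith [mul_nonneg_of_nonpos_of_nonpos hLM hMN]) (mul_nonneg hn hl)
  have h6 : L.side z ^ 2 ≤ 4 * (L.form M ^ 2 + M.form N ^ 2 + N.form L ^ 2 -
      2 * L.form M * M.form N * N.form L - 1) / (1 - M.form N ^ 2) := by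
    rw [le_div_iff₀ (by linarith)]
    linarith
  nlinarith [sq_nonneg (L.side z - 1)]

end Mirror

lemma UpperHalfPlane.dist_I_le (z : ℍ) : dist z I ≤ (z.re ^ 2 + z.im ^ 2 + 1) / (2 * z.im) := by
  have h : Real.cosh (dist z I) = (z.re ^ 2 + z.im ^ 2 + 1) / (2 * z.im) := by
    rw [cosh_dist']
    simp
  rw [← h]
  exact (Real.self_le_sinh_iff.2 dist_nonneg).trans (Real.sinh_lt_cosh _).le

open Real in
/-- There is a compact hyperbolic triangle with prescribed angles. -/
lemma exists_mirror_triangle {α β γ : ℝ} (hα : 0 < α) (hβ : 0 < β) (hγ : 0 < γ) (hα' : α ≤ π / 2)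
    (hβ' : β ≤ π / 2) (hγ' : γ ≤ π / 2) (hsum : α + β + γ < π) :
    ∃ T : Fin 3 → Mirror, (T 0).form (T 1) = -cos α ∧ (T 1).form (T 2) = -cos β ∧
      (T 2).form (T 0) = -cos γ ∧ (∃ x, ∀ i, 0 < (T i).side x) ∧
      ∃ R, ∀ z, (∀ i, 0 ≤ (T i).side z) → dist z I ≤ R := by
  have hA : 0 ≤ cos α := cos_nonneg_of_neg_pi_div_two_le_of_le (by linarith) hα'
  have hB : 0 ≤ cos β := cos_nonneg_of_neg_pi_div_two_le_of_le (by linarith) hβ'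
  have hC : 0 ≤ cos γ := cos_nonneg_of_neg_pi_div_two_le_of_le (by linarith) hγ'
  have hS : 0 < sin α := sin_pos_of_pos_of_lt_pi hα (by linarith)
  have hSβ : 0 < sin β := sin_pos_of_pos_of_lt_pi hβ (by linarith)
  have hSγ : 0 < sin γ := sin_pos_of_pos_of_lt_pi hγ (by linarith)
  have hdet : sin α * sin γ < cos β + cos α * cos γ := by
    have := cos_lt_cos_of_nonneg_of_le_pi hβ.le (by linarith : π - (α + γ) ≤ π) (by linarith)
    rw [cos_pi_sub, cos_add] at this
    linarith
  have hSα2 := sin_sq_add_cos_sq α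
  have hSβ2 := sin_sq_add_cos_sq β
  have hSγ2 := sin_sq_add_cos_sq γ
  have hA1 : cos α ≤ 1 := cos_le_one α
  have hC1 : cos γ ≤ 1 := cos_le_one γ
  obtain ⟨D, hD⟩ : ∃ D, sin α * D = cos β + cos α * cos γ :=
    ⟨(cos β + cos α * cos γ) / sin α, by field_simp⟩
  have hDγ : sin γ < D := by
    rw [← hD] at hdet
    exact lt_of_mul_lt_mul_left hdet hS.le
  obtain ⟨E, hE, hE2⟩ : ∃ E, 0 < E ∧ E ^ 2 = D ^ 2 - sin γ ^ 2 := by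
    have : 0 < D ^ 2 - sin γ ^ 2 := by nlinarith
    exact ⟨√(D ^ 2 - sin γ ^ 2), sqrt_pos.2 this, sq_sqrt this.le⟩
  have hD0 : 0 < D := hSγ.trans hDγ
  have hED : E < D := by nlinarith
  generalize cos α = A at *
  generalize cos β = B at *
  generalize cos γ = C at *
  generalize sin α = S at *
  generalize sin β = Sβ at *
  generalize sin γ = Sγ at *
  let T : Fin 3 → Mirror := ![⟨-1, 0, 0, by norm_num⟩, ⟨A, S, S, by linarith⟩,
    ⟨C, -D - E, -D + E, by linarith⟩]
  have h01 : (T 0).form (T 1) = -A := by simp [T, Mirror.form]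
  have h12 : (T 1).form (T 2) = -B := by simp [T, Mirror.form]; linarith
  have h20 : (T 2).form (T 0) = -C := by simp [T, Mirror.form]
  have s0 (z : ℍ) : (T 0).side z = 2 * z.re / z.im := by simp [T, Mirror.side]
  have s1 (z : ℍ) : (T 1).side z = (S * (z.re ^ 2 + z.im ^ 2 - 1) - 2 * A * z.re) / z.im := by
    simp only [T, Mirror.side, Matrix.cons_val]; ring
  have s2 (z : ℍ) : (T 2).side z =
      (D + E - (D - E) * (z.re ^ 2 + z.im ^ 2) - 2 * C * z.re) / z.im := by
    simp only [T, Mirror.side, Matrix.cons_val]; ring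
  refine ⟨T, h01, h12, h20, ?_, ?_⟩
  · obtain ⟨n, hn1, hn2⟩ : ∃ n, 1 < n ∧ 0 < D + E - (D - E) * n := by
      have hED0 : 0 < E / D := by positivity
      refine ⟨1 + E / D, by linarith, ?_⟩
      have : E / D * D = E := by field_simp
      nlinarith
    obtain ⟨x, hx, hx1, hx2, hx3⟩ : ∃ x : ℝ, 0 < x ∧ x < 1 ∧ 2 * x < S * (n - 1) ∧
        2 * x < D + E - (D - E) * n := by
      obtain ⟨x, hx, hx'⟩ := exists_between
        (lt_min one_pos (lt_min (half_pos (mul_pos hS (sub_pos.2 hn1))) (half_pos hn2)))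
      rw [lt_min_iff, lt_min_iff] at hx'
      exact ⟨x, hx, hx'.1, by linarith, by linarith⟩
    have hy : 0 < n - x ^ 2 := by nlinarith
    refine ⟨⟨⟨x, √(n - x ^ 2)⟩, sqrt_pos.2 hy⟩, ?_⟩
    intro i
    have e : x ^ 2 + √(n - x ^ 2) ^ 2 = n := by rw [sq_sqrt hy.le]; ring
    fin_cases i
    · change 0 < (T 0).side _
      rw [s0]
      exact div_pos (mul_pos two_pos hx) (sqrt_pos.2 hy)
    · change 0 < (T 1).side _
      rw [s1]
      refine div_pos ?_ (sqrt_pos.2 hy)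
      change 0 < S * (x ^ 2 + √(n - x ^ 2) ^ 2 - 1) - 2 * A * x
      rw [e]
      linarith [mul_le_mul_of_nonneg_right hA1 hx.le]
    · change 0 < (T 2).side _
      rw [s2]
      refine div_pos ?_ (sqrt_pos.2 hy)
      change 0 < D + E - (D - E) * (x ^ 2 + √(n - x ^ 2) ^ 2) - 2 * C * x
      rw [e]
      linarith [mul_le_mul_of_nonneg_right hC1 hx.le]
  · have hA2 : (-A) ^ 2 < 1 := by linarith [pow_pos hS 2, neg_sq A]
    have hB2 : (-B) ^ 2 < 1 := by linarith [pow_pos hSβ 2, neg_sq B]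
    have hC2 : (-C) ^ 2 < 1 := by linarith [pow_pos hSγ 2, neg_sq C]
    rw [← neg_nonpos] at hA hB hC
    rw [← h01] at hA hA2
    rw [← h12] at hB hB2
    rw [← h20] at hC hC2
    obtain ⟨K₀, h₀⟩ := Mirror.exists_side_le _ _ _ hA hB hC hA2 hB2 hC2
    obtain ⟨K₁, h₁⟩ := Mirror.exists_side_le _ _ _ hB hC hA hB2 hC2 hA2
    obtain ⟨K₂, h₂⟩ := Mirror.exists_side_le _ _ _ hC hA hB hC2 hA2 hB2
    refine ⟨((K₁ + K₀) / S + (K₂ + K₀ + (D - E) * ((K₁ + K₀) / S)) / E) / 2, fun z hz ↦ ?_⟩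
    have b₀ := h₀ z (hz 0) (hz 1) (hz 2)
    have b₁ := h₁ z (hz 1) (hz 2) (hz 0)
    have b₂ := h₂ z (hz 2) (hz 0) (hz 1)
    have hz0 := hz 0
    have hy := z.im_ne_zero
    have hU : (z.re ^ 2 + z.im ^ 2) / z.im - 1 / z.im = ((T 1).side z + A * (T 0).side z) / S := by
      rw [s0, s1]; field_simp; ring
    have hV : (D + E) * (1 / z.im) - (D - E) * ((z.re ^ 2 + z.im ^ 2) / z.im) =
        (T 2).side z + C * (T 0).side z := by
      rw [s0, s2]; field_simp; ring
    have hU' : ((T 1).side z + A * (T 0).side z) / S ≤ (K₁ + K₀) / S := by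
      gcongr
      linarith [mul_le_mul_of_nonneg_right hA1 hz0]
    rw [← hU] at hU'
    have hV' : (T 2).side z + C * (T 0).side z ≤ K₂ + K₀ := by
      linarith [mul_le_mul_of_nonneg_right hC1 hz0]
    rw [← hV] at hV'
    refine (UpperHalfPlane.dist_I_le z).trans ?_
    have e : (z.re ^ 2 + z.im ^ 2 + 1) / (2 * z.im) =
        ((z.re ^ 2 + z.im ^ 2) / z.im + 1 / z.im) / 2 := by field_simp
    rw [e]
    generalize (z.re ^ 2 + z.im ^ 2) / z.im = P at *
    generalize 1 / z.im = Q at *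
    generalize (K₁ + K₀) / S = U at *
    have hQ : 2 * Q ≤ (K₂ + K₀ + (D - E) * U) / E := by
      rw [le_div_iff₀ hE]
      linarith [mul_le_mul_of_nonneg_left hU' (sub_pos.2 hED).le]
    linarith

namespace CoxeterSystem

variable {B W X : Type*} [Group W] {M : CoxeterMatrix B} (cs : CoxeterSystem M W) [MulAction W X]

/-- A family of real functions on a `W`-set that transform under the simple reflections like the
simple roots of the geometric representation. -/
def IsRootFamily (f : B → X → ℝ) : Prop :=
  ∀ i j x, f j (cs.simple i • x) = f j x + 2 * Real.cos (Real.pi / M i j) * f i x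

variable {cs}

lemma IsRootFamily.apply_simple_smul_self {f : B → X → ℝ} (hf : cs.IsRootFamily f) (i : B) (x : X) :
    f i (cs.simple i • x) = -f i x := by
  rw [hf, M.diagonal]; simp; ring

lemma IsRootFamily.sin_mul_apply_alternatingWord_inv_smul {f : B → X → ℝ} (hf : cs.IsRootFamily f)
    (y : X) (k : ℕ) : ∀ i j : B,
    Real.sin (Real.pi / M i j) * f i ((cs.wordProd (alternatingWord i j k))⁻¹ • y) =
      Real.sin ((k + 1) * (Real.pi / M i j)) * f (if Even k then i else j) y +
      Real.sin (k * (Real.pi / M i j)) * f (if Even k then j else i) y := by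
  induction k using Nat.strong_induction_on with
  | _ k ih =>
    intro i j
    match k, ih with
    | 0, _ => simp [alternatingWord]
    | 1, _ =>
      simp [alternatingWord, hf j i, M.symmetric j i, Real.sin_two_mul, one_add_one_eq_two]
      ring
    | k + 2, ih =>
      have h₀ := ih k (by omega) i j
      have h₁ := ih (k + 1) (by omega) j i
      have e : (cs.wordProd (alternatingWord i j (k + 2)))⁻¹ • y = cs.simple j • cs.simple i •
          (cs.wordProd (alternatingWord i j k))⁻¹ • y := by
        simp [alternatingWord_succ, wordProd_append, wordProd_cons, smul_smul, mul_assoc]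
      have e' : (cs.wordProd (alternatingWord j i (k + 1)))⁻¹ • y = cs.simple i •
          (cs.wordProd (alternatingWord i j k))⁻¹ • y := by
        simp [alternatingWord_succ, wordProd_append, smul_smul]
      rw [e'] at h₁
      rw [e, hf j i, hf.apply_simple_smul_self i, mul_add]
      rw [M.symmetric j i] at h₁ ⊢
      set θ := Real.pi / M i j
      have s1 : Real.sin ((((k + 2 : ℕ) : ℝ) + 1) * θ) =
          2 * Real.cos θ * Real.sin ((((k + 1 : ℕ) : ℝ) + 1) * θ) -
            Real.sin (((k : ℝ) + 1) * θ) := by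
        have e1 : (((k + 2 : ℕ) : ℝ) + 1) * θ = (k + 2) * θ + θ := by push_cast; ring
        have e2 : (((k + 1 : ℕ) : ℝ) + 1) * θ = (k + 2) * θ := by push_cast; ring
        have e3 : ((k : ℝ) + 1) * θ = (k + 2) * θ - θ := by ring
        rw [e1, e2, e3, Real.sin_add, Real.sin_sub]; ring
      have s2 : Real.sin (((k + 2 : ℕ) : ℝ) * θ) =
          2 * Real.cos θ * Real.sin (((k + 1 : ℕ) : ℝ) * θ) - Real.sin ((k : ℝ) * θ) := by
        have e1 : ((k + 2 : ℕ) : ℝ) * θ = (k + 1) * θ + θ := by push_cast; ring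
        have e2 : ((k + 1 : ℕ) : ℝ) * θ = (k + 1) * θ := by push_cast; ring
        have e3 : (k : ℝ) * θ = (k + 1) * θ - θ := by ring
        rw [e1, e2, e3, Real.sin_add, Real.sin_sub]; ring
      rw [s1, s2]
      by_cases hk : Even k
      · have hk1 : ¬ Even (k + 1) := by simpa [Nat.even_add_one] using hk
        have hk2 : Even (k + 2) := by simpa [Nat.even_add] using hk
        simp only [hk, hk1, hk2, if_true, if_false] at h₀ h₁ ⊢
        linear_combination (2 * Real.cos θ) * h₁ - h₀
      · have hk1 : Even (k + 1) := by simpa [Nat.even_add_one] using hk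
        have hk2 : ¬ Even (k + 2) := by simpa [Nat.even_add] using hk
        simp only [hk, hk1, hk2, if_true, if_false] at h₀ h₁ ⊢
        linear_combination (2 * Real.cos θ) * h₁ - h₀

lemma IsRootFamily.apply_alternatingWord_inv_smul_pos {f : B → X → ℝ} (hf : cs.IsRootFamily f)
    {i j : B} {y : X} (hi : 0 < f i y) (hj : 0 < f j y) {k : ℕ} (hk : k < M i j)
    (hM : 2 ≤ M i j) :
    0 < f i ((cs.wordProd (alternatingWord i j k))⁻¹ • y) := by
  have hM' : (2 : ℝ) ≤ M i j := by exact_mod_cast hM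
  have hk' : (k : ℝ) + 1 ≤ M i j := by exact_mod_cast hk
  have key := hf.sin_mul_apply_alternatingWord_inv_smul y k i j
  set θ := Real.pi / M i j with hθ
  have hθ0 : 0 < θ := by positivity
  have hmθ : M i j * θ = Real.pi := by rw [hθ]; field_simp
  have hs : 0 < Real.sin θ :=
    Real.sin_pos_of_pos_of_lt_pi hθ0 (by nlinarith)
  refine pos_of_mul_pos_right (a := Real.sin θ) ?_ hs.le
  rw [key]
  have hA : 0 < f (if Even k then i else j) y := by split_ifs <;> assumption
  have hB : 0 < f (if Even k then j else i) y := by split_ifs <;> assumption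
  rcases Nat.eq_zero_or_pos k with rfl | hk0
  · simpa using mul_pos hs hi
  · have hk0' : (0 : ℝ) < k := by exact_mod_cast hk0
    have h1 : 0 ≤ Real.sin ((k + 1) * θ) :=
      Real.sin_nonneg_of_nonneg_of_le_pi (by positivity) (by nlinarith)
    have h2 : 0 < Real.sin (k * θ) :=
      Real.sin_pos_of_pos_of_lt_pi (by positivity) (by nlinarith)
    positivity

lemma exists_alternatingWord_add (i j : B) (d m : ℕ) : ∃ ω : List B, ω.length = d ∧
    alternatingWord i j (d + m) = ω ++ alternatingWord i j m := by
  induction d with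
  | zero => exact ⟨[], rfl, by simp⟩
  | succ d ih =>
    obtain ⟨ω, hω, h⟩ := ih
    refine ⟨(if Even (d + m) then j else i) :: ω, by simp [hω], ?_⟩
    rw [Nat.add_right_comm, alternatingWord_succ', h, List.cons_append]

/-- **Tits lemma**: if `w sᵢ` is longer than `w`, then `w⁻¹` maps the open fundamental chamber into
the positive side of the wall of `i`. -/
theorem IsRootFamily.apply_inv_smul_pos {f : B → X → ℝ} (hf : cs.IsRootFamily f)
    (hM : ∀ i j, M i j ≠ 0) {x : X} (hx : ∀ i, 0 < f i x) (w : W) :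
    ∀ i, ¬ cs.IsRightDescent w i → 0 < f i (w⁻¹ • x) := by
  induction hn : cs.length w using Nat.strong_induction_on generalizing w with
  | _ n ih =>
    intro i hi
    by_cases hw : w = 1
    · subst hw; simpa using hx i
    obtain ⟨j, hj⟩ := cs.exists_rightDescent_of_ne_one hw
    have hij : i ≠ j := by rintro rfl; exact hi hj
    have hMij : 2 ≤ M i j := by
      have := hM i j
      have := M.off_diagonal i j hij
      omega
    rw [cs.not_isRightDescent_iff] at hi
    have no_shorter : ∀ ω : List B, ∀ v : W, w = v * cs.wordProd ω * cs.simple i →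
        cs.length w ≤ cs.length v + ω.length := by
      rintro ω v h
      have : w * cs.simple i = v * cs.wordProd ω := by rw [h]; simp
      have h1 := cs.length_mul_le v (cs.wordProd ω)
      have h2 := cs.length_wordProd_le ω
      rw [← this] at h1
      omega
    have main : ∀ l k v, cs.length v = l → w = v * cs.wordProd (alternatingWord i j (k + 1)) →
        cs.length w = cs.length v + (k + 1) → 0 < f i (w⁻¹ • x) := by
      intro l
      induction l using Nat.strong_induction_on with
      | _ l ihl =>
        intro k v hvl hwv hlen
        have hk : k + 1 < M i j := by
          by_contra! hle
          obtain ⟨d, hd⟩ := Nat.exists_eq_add_of_le' hle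
          obtain ⟨m, hm⟩ : ∃ m, M i j = m + 1 := ⟨M i j - 1, by omega⟩
          obtain ⟨ω, hω, hωa⟩ := exists_alternatingWord_add i j d (M i j)
          have hbraid : cs.wordProd (alternatingWord i j (M i j)) =
              cs.wordProd (alternatingWord i j m) * cs.simple i := by
            have := cs.wordProd_braidWord_eq i j
            rw [braidWord, braidWord, M.symmetric j i] at this
            rw [this, hm, alternatingWord_succ, wordProd_concat]
          have := no_shorter (ω ++ alternatingWord i j m) v (by
            rw [hwv, hd, hωa, wordProd_append, wordProd_append, hbraid]
            simp only [mul_assoc])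
          simp only [List.length_append, length_alternatingWord] at this
          omega
        by_cases hp : cs.IsRightDescent v (if Even (k + 1) then j else i)
        · have hp' := cs.isRightDescent_iff.1 hp
          refine ihl _ (by omega) (k + 1) (v * cs.simple (if Even (k + 1) then j else i)) rfl ?_
            (by omega)
          rw [alternatingWord_succ', wordProd_cons, hwv, ← mul_assoc,
            cs.simple_mul_simple_cancel_right]
        have hq : ¬ cs.IsRightDescent v (if Even k then j else i) := by
          intro hq
          rw [cs.isRightDescent_iff] at hq
          rw [alternatingWord_succ', wordProd_cons, ← mul_assoc] at hwv
          have h1 := cs.length_mul_le (v * cs.simple (if Even k then j else i))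
            (cs.wordProd (alternatingWord i j k))
          have h2 := cs.length_wordProd_le (alternatingWord i j k)
          rw [length_alternatingWord] at h2
          rw [← hwv] at h1
          omega
        have hij' : ¬ cs.IsRightDescent v i ∧ ¬ cs.IsRightDescent v j := by
          by_cases he : Even k <;> simp_all [Nat.even_add_one]
        have hlt : cs.length v < n := by omega
        rw [hwv, mul_inv_rev, mul_smul]
        exact hf.apply_alternatingWord_inv_smul_pos (ih _ hlt v rfl i hij'.1)
          (ih _ hlt v rfl j hij'.2) hk hMij
    refine main _ 0 (w * cs.simple j) rfl (by simp [alternatingWord]) ?_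
    rw [cs.isRightDescent_iff] at hj
    omega

theorem IsRootFamily.exists_apply_smul_neg {f : B → X → ℝ} (hf : cs.IsRootFamily f)
    (hM : ∀ i j, M i j ≠ 0) {x : X} (hx : ∀ i, 0 < f i x) {w : W} (hw : w ≠ 1) :
    ∃ i, f i (w • x) < 0 := by
  obtain ⟨i, hi⟩ := cs.exists_rightDescent_of_ne_one (inv_ne_one.2 hw)
  rw [cs.isRightDescent_iff_not_isRightDescent_mul] at hi
  have h := hf.apply_inv_smul_pos hM hx _ i hi
  rw [mul_inv_rev, inv_inv, cs.inv_simple, mul_smul, hf.apply_simple_smul_self] at h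
  exact ⟨i, neg_pos.1 h⟩

end CoxeterSystem

lemma finite_setOf_dist_orbit_le {W X : Type*} [Group W] [MetricSpace X] [ProperSpace X]
    (ρ : W →* (X ≃ᵢ X)) {x : X} {ε : ℝ} (hε : 0 < ε)
    (h : ∀ w : W, w ≠ 1 → ε ≤ dist (ρ w x) x) (R : ℝ) :
    {w : W | dist (ρ w x) x ≤ R}.Finite := by
  have htb : TotallyBounded (Metric.closedBall x R) := (isCompact_closedBall x R).totallyBounded
  obtain ⟨t, ht, hcov⟩ := Metric.totallyBounded_iff.1 htb (ε / 2) (by positivity)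
  have hmem : ∀ w : {w : W | dist (ρ w x) x ≤ R}, ∃ y ∈ t, dist (ρ w x) y < ε / 2 := fun w ↦ by
    simpa using hcov (Metric.mem_closedBall.2 w.2)
  choose y hyt hy using hmem
  have := ht.to_subtype
  refine Set.finite_coe_iff.1 (Finite.of_injective (fun w ↦ (⟨y w, hyt w⟩ : t)) fun v w hvw ↦ ?_)
  have hvw' : y v = y w := congrArg Subtype.val hvw
  by_contra hne
  have hne' : (w : W)⁻¹ * v ≠ 1 := fun h1 ↦ hne (Subtype.ext (inv_mul_eq_one.1 h1).symm)
  have h1 := h _ hne'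
  have h2 : dist (ρ ((w : W)⁻¹ * v) x) x = dist (ρ v x) (ρ w x) := by
    rw [← (ρ w).dist_eq, ← IsometryEquiv.mul_apply, ← map_mul, mul_inv_cancel_left]
  have h3 := dist_triangle_right (ρ v x) (ρ w x) (y v)
  have h4 := hy v
  have h5 := hy w
  rw [← hvw'] at h5
  linarith

/-- The Coxeter matrix of the `(a,b,c)` triangle group. -/
def triangleMatrix {a b c : ℕ} (ha : 2 ≤ a) (hb : 2 ≤ b) (hc : 2 ≤ c) : CoxeterMatrix (Fin 3) where
  M := !![1, a, c; a, 1, b; c, b, 1]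
  isSymm := by
    ext i j
    fin_cases i <;> fin_cases j <;> rfl
  diagonal i := by fin_cases i <;> rfl
  off_diagonal i j h := by
    fin_cases i <;> fin_cases j <;> simp_all <;> omega

lemma isLiftable_triangleMatrix {G : Type*} [Group G] {a b c : ℕ} (ha : 2 ≤ a)
    (hb : 2 ≤ b) (hc : 2 ≤ c) (g : Fin 3 → G)
    (h : ∀ r ∈ triangleRels a b c, FreeGroup.lift g r = 1) :
    (triangleMatrix ha hb hc).IsLiftable g := by
  simp only [triangleRels, Set.mem_insert_iff, Set.mem_singleton_iff, forall_eq_or_imp, forall_eq,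
    map_pow, map_mul, FreeGroup.lift_apply_of] at h
  obtain ⟨h0, h1, h2, h01, h12, h20⟩ := h
  have i0 : (g 0)⁻¹ = g 0 := inv_eq_of_mul_eq_one_left (by rw [← sq, h0])
  have i1 : (g 1)⁻¹ = g 1 := inv_eq_of_mul_eq_one_left (by rw [← sq, h1])
  have i2 : (g 2)⁻¹ = g 2 := inv_eq_of_mul_eq_one_left (by rw [← sq, h2])
  have h10 : (g 1 * g 0) ^ a = 1 := by
    rw [← inv_inj, ← inv_pow, mul_inv_rev, i0, i1, h01, inv_one]
  have h21 : (g 2 * g 1) ^ b = 1 := by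
    rw [← inv_inj, ← inv_pow, mul_inv_rev, i1, i2, h12, inv_one]
  have h02 : (g 0 * g 2) ^ c = 1 := by
    rw [← inv_inj, ← inv_pow, mul_inv_rev, i0, i2, h20, inv_one]
  intro i j
  fin_cases i <;> fin_cases j <;> simp [triangleMatrix, ← sq, *]

/-- The `(a,b,c)` triangle group is a Coxeter group. -/
def triangleCoxeterSystem {a b c : ℕ} (ha : 2 ≤ a) (hb : 2 ≤ b) (hc : 2 ≤ c) :
    CoxeterSystem (triangleMatrix ha hb hc) (PresentedGroup (triangleRels a b c)) where
  mulEquiv := MonoidHom.toMulEquiv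
    (PresentedGroup.toGroup (f := (triangleMatrix ha hb hc).simple) (by
      have key : ∀ i j, ((triangleMatrix ha hb hc).simple i * (triangleMatrix ha hb hc).simple j) ^
          (triangleMatrix ha hb hc) i j = 1 :=
        (triangleMatrix ha hb hc).toCoxeterSystem.simple_mul_simple_pow
      simp only [triangleRels, Set.mem_insert_iff, Set.mem_singleton_iff, forall_eq_or_imp,
        forall_eq, map_pow, map_mul, FreeGroup.lift_apply_of]
      have sq := (triangleMatrix ha hb hc).toCoxeterSystem.simple_sq
      exact ⟨sq 0, sq 1, sq 2, key 0 1, key 1 2, key 2 0⟩))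
    ((triangleMatrix ha hb hc).toCoxeterSystem.lift ⟨PresentedGroup.of, by
      apply isLiftable_triangleMatrix
      intro r hr
      have h : FreeGroup.lift PresentedGroup.of = PresentedGroup.mk (triangleRels a b c) := by
        ext i
        simp [PresentedGroup.of]
      rw [h]
      exact PresentedGroup.one_of_mem hr⟩)
    (by
      ext i
      simp only [MonoidHom.comp_apply, PresentedGroup.toGroup.of, MonoidHom.id_apply]
      exact CoxeterSystem.lift_apply_simple _ _ i)
    (by
      apply (triangleMatrix ha hb hc).toCoxeterSystem.ext_simple
      intro i
      rw [MonoidHom.comp_apply, CoxeterSystem.lift_apply_simple]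
      exact PresentedGroup.toGroup.of _)

lemma exists_triangle_reflections {a b c : ℕ} (ha : 2 ≤ a) (hb : 2 ≤ b) (hc : 2 ≤ c)
    (hyp : (a : ℝ)⁻¹ + (b : ℝ)⁻¹ + (c : ℝ)⁻¹ < 1) :
    ∃ T : Fin 3 → Mirror,
      (∀ i j, (T i).form (T j) = -Real.cos (Real.pi / triangleMatrix ha hb hc i j)) ∧
      (∃ x, ∀ i, 0 < (T i).side x) ∧ ∃ R, ∀ z, (∀ i, 0 ≤ (T i).side z) → dist z I ≤ R := by
  have hpos {n : ℕ} (hn : 2 ≤ n) : 0 < Real.pi / n := by positivity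
  have hle {n : ℕ} (hn : 2 ≤ n) : Real.pi / n ≤ Real.pi / 2 := by
    have : (2 : ℝ) ≤ n := by exact_mod_cast hn
    gcongr
  have hsum : Real.pi / a + Real.pi / b + Real.pi / c < Real.pi := by
    have := mul_lt_mul_of_pos_left hyp Real.pi_pos
    simp only [div_eq_mul_inv]
    linarith
  obtain ⟨T, h01, h12, h20, hx, hR⟩ := exists_mirror_triangle (hpos ha) (hpos hb) (hpos hc)
    (hle ha) (hle hb) (hle hc) hsum
  refine ⟨T, fun i j ↦ ?_, hx, hR⟩
  have h10 := (Mirror.form_comm _ _).trans h01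
  have h21 := (Mirror.form_comm _ _).trans h12
  have h02 := (Mirror.form_comm _ _).trans h20
  fin_cases i <;> fin_cases j <;> simp [triangleMatrix, Mirror.form_self, *]

/-- The hyperbolic triangle group `T_{a,b,c}` (with `2 ≤ a ≤ b ≤ c` and
`1/a + 1/b + 1/c < 1`), generated by the reflections in the sides of a
hyperbolic triangle with angles `π/a, π/b, π/c`, acts faithfully, properly
discontinuously and cocompactly by isometries on the hyperbolic plane: it is a
cocompact lattice in the isometry group of the hyperbolic plane. -/
theorem triangle_group_cocompact_lattice
    (a b c : ℕ) (ha : 2 ≤ a) (hab : a ≤ b) (hbc : b ≤ c)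
    (hyp : (a : ℝ)⁻¹ + (b : ℝ)⁻¹ + (c : ℝ)⁻¹ < 1) :
    ∃ ρ : PresentedGroup (triangleRels a b c) →* (ℍ ≃ᵢ ℍ),
      Function.Injective ρ ∧
      -- the action is properly discontinuous
      (∀ K : Set ℍ, IsCompact K →
        {g : PresentedGroup (triangleRels a b c) |
          ((ρ g) '' K ∩ K).Nonempty}.Finite) ∧
      -- the action is cocompact
      (∃ K : Set ℍ, IsCompact K ∧
        (⋃ g : PresentedGroup (triangleRels a b c), (ρ g) '' K) = Set.univ) := by
  have hb : 2 ≤ b := ha.trans hab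
  have hc : 2 ≤ c := hb.trans hbc
  obtain ⟨T, hT, ⟨x, hx⟩, R, hR⟩ := exists_triangle_reflections ha hb hc hyp
  set M := triangleMatrix ha hb hc
  set cs := triangleCoxeterSystem ha hb hc
  have hM0 : ∀ i j, M i j ≠ 0 := by
    intro i j
    fin_cases i <;> fin_cases j <;> simp [M, triangleMatrix] <;> omega
  have hlift : M.IsLiftable fun i ↦ (T i).reflection := by
    intro i j
    rcases eq_or_ne i j with rfl | hij
    · rw [M.diagonal, pow_one, Mirror.reflection_mul_self]
    · refine Mirror.reflection_mul_pow_eq_one _ _ ?_ (hT i j)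
      have := hM0 i j
      have := M.off_diagonal i j hij
      omega
  set ρ := cs.lift ⟨_, hlift⟩
  have hρ (i : Fin 3) : ρ (cs.simple i) = (T i).reflection := cs.lift_apply_simple hlift i
  let _ : MulAction (PresentedGroup (triangleRels a b c)) ℍ :=
    { smul w z := ρ w z
      one_smul z := by change ρ 1 z = z; rw [map_one]; rfl
      mul_smul v w z := by change ρ (v * w) z = ρ v (ρ w z); rw [map_mul]; rfl }
  have hroot : cs.IsRootFamily fun i ↦ (T i).side := by
    intro i j z
    change (T j).side (ρ (cs.simple i) z) = _
    rw [hρ, Mirror.reflection_apply, Mirror.side_toGL_smul, hT]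
    ring
  obtain ⟨ε, hε, hball⟩ : ∃ ε > 0, ∀ z, dist z x < ε → ∀ i, 0 < (T i).side z := by
    have : ∀ᶠ z in nhds x, ∀ i, 0 < (T i).side z := Filter.eventually_all.2 fun i ↦
      (T i).continuous_side.continuousAt.eventually (lt_mem_nhds (hx i))
    exact Metric.eventually_nhds_iff.1 this
  have hsep : ∀ w, w ≠ 1 → ε ≤ dist (ρ w x) x := by
    intro w hw
    obtain ⟨i, hi⟩ := hroot.exists_apply_smul_neg hM0 hx hw
    by_contra! hlt
    exact lt_asymm hi (hball _ hlt i)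
  have hfin := finite_setOf_dist_orbit_le ρ hε hsep
  refine ⟨ρ, ?_, ?_, ?_⟩
  · rw [injective_iff_map_eq_one]
    intro w hw
    by_contra hne
    have := hsep w hne
    rw [hw, IsometryEquiv.coe_one, id, dist_self] at this
    linarith
  · intro K hK
    obtain ⟨r, hr⟩ := hK.isBounded.subset_closedBall x
    refine (hfin (r + r)).subset ?_
    rintro w ⟨_, ⟨z, hz, rfl⟩, hwz⟩
    have h1 := dist_triangle (ρ w x) (ρ w z) x
    rw [(ρ w).dist_eq, dist_comm x z] at h1
    exact h1.trans (add_le_add (hr hz) (hr hwz))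
  · refine ⟨Metric.closedBall I R, isCompact_closedBall _ _, ?_⟩
    refine Set.eq_univ_of_forall fun z ↦ ?_
    have hfinz : {w | dist (ρ w z) x ≤ dist z x}.Finite := by
      refine (hfin (dist z x + dist z x)).subset fun w hw ↦ ?_
      have h1 := dist_triangle (ρ w x) (ρ w z) x
      rw [(ρ w).dist_eq, dist_comm x z] at h1
      exact h1.trans (add_le_add_right hw _)
    obtain ⟨w, hw, hmin⟩ := Set.exists_min_image _ (fun w ↦ dist (ρ w z) x) hfinz
      ⟨1, by simp⟩
    have hside : ∀ i, 0 ≤ (T i).side (ρ w z) := by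
      intro i
      by_contra! hneg
      have hlt : dist (ρ (cs.simple i * w) z) x < dist (ρ w z) x := by
        have h1 : ρ (cs.simple i * w) z = (T i).toGL • ρ w z := by
          rw [map_mul, hρ]; rfl
        have h2 := (T i).cosh_dist_toGL_smul (ρ w z) x
        rw [← h1] at h2
        have h3 := mul_neg_of_neg_of_pos hneg (hx i)
        have h4 := Real.cosh_lt_cosh.1 (by linarith :
          Real.cosh (dist (ρ (cs.simple i * w) z) x) < Real.cosh (dist (ρ w z) x))
        simpa only [abs_dist] using h4
      exact hlt.not_ge (hmin _ (hlt.le.trans hw))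
    refine Set.mem_iUnion.2 ⟨w⁻¹, ρ w z, hR _ hside, ?_⟩
    rw [← IsometryEquiv.mul_apply, ← map_mul, inv_mul_cancel, map_one]
    rfl
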